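/- Let ⟨N, E, f⟩ be a deterministic synchronized Petri net with P = Pz ⊎ P_{s,1} ⊎ … ⊎ P_{s,n} and T = Tz ⊎ T_{s,1} ⊎ … ⊎ T_{s,n}, such that for each i every t ∈ T_{s,i} has exactly one input place ins(t) ∈ P_{s,i} and one output place outs(t) ∈ P_{s,i} with Pre(ins(t), t) = Post(outs(t), t) = 1 and Pre(p, t) = Post(p, t) = 0 for all other p ∈ P_{s,1} ∪ … ∪ P_{s,n}, and every t ∈ Tz satisfies Pre(p, t) = Post(p, t) = 0 for all p ∈ P_{s,1} ∪ … ∪ P_{s,n} (condition i). For each i let N_{s,i} be the synchronized state machine with places P_{s,i}, transitions T_{s,i} and labeling f restricted to T_{s,i}; let κ_i ∈ ℕ and let w̄_i ∈ E* be a synchronizing sequence of N_{s,i}: Ms →w̄_i M̄_{s,i} in N_{s,i} for every marking Ms of N_{s,i} with Σ_{p∈P_{s,i}} Ms(p) = κ_i. Suppose condition ii holds: for every i and every letter e of w̄_i, no t ∈ T_{s,1} ∪ … ∪ T_{s,i} with f(t) = e has an input place in Pz. For each i define M̄'_{s,i} by M̄_{s,i} →(w̄_{i+1} … w̄_n) M̄'_{s,i}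 in N_{s,i}. Then for every marking M of N with Σ_{p∈P_{s,i}} M(p) = κ_i for all i, if M →(w̄_1 w̄_2 … w̄_n) M' in N then M'(p) = M̄'_{s,i}(p) for every i and every p ∈ P_{s,i}. -/

import Mathlib

open scoped Classical BigOperators

/-- A synchronized Petri net `⟨N, E, f⟩`: `Pre`/`Post` incidence functions
and a labeling `f` of transitions by input events. -/
structure SyncPN (P T E : Type) where
  Pre : P → T → ℕ
  Post : P → T → ℕ
  f : T → E

/-- A transition `t` is enabled at marking `M` if `M(p) ≥ Pre(p,t)` for all `p`. -/
def enabled {P T E : Type} (N : SyncPN P T E) (M : P → ℕ) (t : T) : Prop :=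
  ∀ p, N.Pre p t ≤ M p

/-- Occurrence of input event `e` at marking `M`: all enabled transitions labeled `e`
fire simultaneously: `step M e (p) = M(p) + Σ Post(p,t) − Σ Pre(p,t)`,
the sums ranging over enabled transitions labeled `e`. -/
noncomputable def step {P T E : Type} [Fintype T] (N : SyncPN P T E) (M : P → ℕ)
    (e : E) : P → ℕ := fun p =>
  M p + (∑ t : T, if N.f t = e ∧ enabled N M t then N.Post p t else 0)
      - ∑ t : T, if N.f t = e ∧ enabled N M t then N.Pre p t else 0

/-- Extension of `step` to input words: `M →w stepWord N M w`. -/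
noncomputable def stepWord {P T E : Type} [Fintype T] (N : SyncPN P T E) (M : P → ℕ)
    (w : List E) : P → ℕ :=
  w.foldl (step N) M

/-- A net is deterministic if no place has two distinct output transitions
sharing the same label. -/
def deterministic {P T E : Type} (N : SyncPN P T E) : Prop :=
  ∀ (p : P) (t t' : T), t ≠ t' → 1 ≤ N.Pre p t → 1 ≤ N.Pre p t' → N.f t ≠ N.f t'

/-- A state machine: each transition `t` has single input place `ins t`
and single output place `outs t`, with arc weight 1. -/
def isSM {P T E : Type} (N : SyncPN P T E) (ins outs : T → P) : Prop :=
  (∀ p t, N.Pre p t = if p = ins t then 1 else 0) ∧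
  (∀ p t, N.Post p t = if p = outs t then 1 else 0)

/-- Strong connectedness of the associated graph of a state machine
(an arc from `ins t` to `outs t` for each transition `t`). -/
def stronglyConnected {P T : Type} (ins outs : T → P) : Prop :=
  ∀ p p' : P, Relation.ReflTransGen (fun a b => ∃ t, ins t = a ∧ outs t = b) p p'

/-- The synchronized state machine `Ns` induced by a state machine subnet
`(Ps, Ts)` with input place map `ins`, output place map `outs` and labeling `f`. -/
noncomputable def subSM {P T E : Type} (Ps : Finset P) (Ts : Finset T)
    (ins outs : T → P) (f : T → E) :
    SyncPN {p // p ∈ Ps} {t // t ∈ Ts} E where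
  Pre := fun q t => if (q : P) = ins t then 1 else 0
  Post := fun q t => if (q : P) = outs t then 1 else 0
  f := fun t => f t

/-!
A deterministic net never overdraws a place, so a step of the full net preserves the number of
tokens in a subnet all of whose transitions are balanced, whatever the surrounding places allow to
fire. Hence the `i`-th subnet still carries `κ i` tokens when its synchronizing word `wbar i`
begins. From then on no letter lets an outside place block a transition of that subnet, so the
subnet evolves exactly as in isolation: `wbar i` brings it to `Mbars i`, and the later words act on
`Mbars i` as they would in the isolated subnet.
-/

section Subnets

variable {P T E : Type} {N : SyncPN P T E} {Ps : Finset P} {Ts : Finset T}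

/-- `N'` is the part of `N` on the places `Ps` and the transitions `Ts`, and `N` has no arc between
`Ps` and a transition outside `Ts`. Arcs between `Ts` and places outside `Ps` are allowed in `N`;
they are forgotten in `N'`. -/
structure IsSubnet (N : SyncPN P T E) (N' : SyncPN {p // p ∈ Ps} {t // t ∈ Ts} E) : Prop where
  pre_eq : ∀ p t, N'.Pre p t = N.Pre p t
  post_eq : ∀ p t, N'.Post p t = N.Post p t
  label_eq : ∀ t, N'.f t = N.f t
  pre_eq_zero : ∀ t ∉ Ts, ∀ p ∈ Ps, N.Pre p t = 0
  post_eq_zero : ∀ t ∉ Ts, ∀ p ∈ Ps, N.Post p t = 0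

/-- Conservativity on a set `S` of places: each transition of `N` takes as many tokens from `S` as
it puts into `S`. -/
def ConservativeOn (N : SyncPN P T E) (S : Finset P) : Prop :=
  ∀ t, ∑ p ∈ S, N.Pre p t = ∑ p ∈ S, N.Post p t

/-- The transitions of `Ts` labeled `e` have all their input places in `Ps`. When every input place
of `Ts` lies in `Ps` or in `Pz`, this is condition (ii) for a single event and a single subnet. -/
def InputsWithin (N : SyncPN P T E) (Ps : Finset P) (Ts : Finset T) (e : E) : Prop :=
  ∀ t ∈ Ts, N.f t = e → ∀ p ∉ Ps, N.Pre p t = 0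

theorem isSM.conservativeOn_univ [Fintype P] {ins outs : T → P} (h : isSM N ins outs) :
    ConservativeOn N Finset.univ := fun t => by
  simp [h.1, h.2]

theorem IsSubnet.conservativeOn {N' : SyncPN {p // p ∈ Ps} {t // t ∈ Ts} E}
    (h : IsSubnet N N') (hcons : ConservativeOn N' Finset.univ) : ConservativeOn N Ps := by
  intro t
  by_cases ht : t ∈ Ts
  · rw [← Finset.sum_coe_sort Ps, ← Finset.sum_coe_sort Ps]
    simpa only [h.pre_eq, h.post_eq] using hcons ⟨t, ht⟩
  · rw [Finset.sum_eq_zero (h.pre_eq_zero t ht), Finset.sum_eq_zero (h.post_eq_zero t ht)]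

theorem isSM_subSM {ins outs : T → P} (hin : ∀ t ∈ Ts, ins t ∈ Ps)
    (hout : ∀ t ∈ Ts, outs t ∈ Ps) (f : T → E) :
    isSM (subSM Ps Ts ins outs f) (fun t => ⟨ins t, hin t t.2⟩)
      (fun t => ⟨outs t, hout t t.2⟩) := by
  simp [isSM, subSM, Subtype.ext_iff]

end Subnets

section StateMachineFamily

variable {ι : Type*} {P T E : Type} {N : SyncPN P T E} {Ps : ι → Finset P} {Ts : ι → Finset T}
  {ins outs : T → P}

theorem isSubnet_subSM (hPdisj : ∀ i j, i ≠ j → Disjoint (Ps i) (Ps j))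
    (hin : ∀ i, ∀ t ∈ Ts i, ins t ∈ Ps i) (hout : ∀ i, ∀ t ∈ Ts i, outs t ∈ Ps i)
    (hPre : ∀ i, ∀ t ∈ Ts i, ∀ j, ∀ p ∈ Ps j, N.Pre p t = if p = ins t then 1 else 0)
    (hPost : ∀ i, ∀ t ∈ Ts i, ∀ j, ∀ p ∈ Ps j, N.Post p t = if p = outs t then 1 else 0)
    (hTz : ∀ t : T, (∀ i, t ∉ Ts i) → ∀ j, ∀ p ∈ Ps j, N.Pre p t = 0 ∧ N.Post p t = 0) (i : ι) :
    IsSubnet N (subSM (Ps i) (Ts i) ins outs N.f) := by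
  have houtside : ∀ t ∉ Ts i, ∀ p ∈ Ps i, N.Pre p t = 0 ∧ N.Post p t = 0 := by
    intro t hti p hp
    by_cases h : ∃ j, t ∈ Ts j
    · obtain ⟨j, htj⟩ := h
      have hji : j ≠ i := fun hji => hti (hji ▸ htj)
      have hne : ∀ q ∈ Ps j, p ≠ q := fun q hq =>
        (Finset.disjoint_iff_ne.1 (hPdisj j i hji) q hq p hp).symm
      simp [hPre j t htj i p hp, hPost j t htj i p hp, hne _ (hin j t htj), hne _ (hout j t htj)]
    · exact hTz t (not_exists.1 h) i p hp
  exact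
    { pre_eq := fun p t => (hPre i t t.2 i p p.2).symm
      post_eq := fun p t => (hPost i t t.2 i p p.2).symm
      label_eq := fun _ => rfl
      pre_eq_zero := fun t ht p hp => (houtside t ht p hp).1
      post_eq_zero := fun t ht p hp => (houtside t ht p hp).2 }

theorem inputsWithin_of_forall_notMem {i : ι} (hin : ∀ t ∈ Ts i, ins t ∈ Ps i)
    (hPre : ∀ t ∈ Ts i, ∀ j, ∀ p ∈ Ps j, N.Pre p t = if p = ins t then 1 else 0) {e : E}
    (he : ∀ t ∈ Ts i, N.f t = e → ∀ p, (∀ j, p ∉ Ps j) → N.Pre p t = 0) :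
    InputsWithin N (Ps i) (Ts i) e := by
  intro t ht hte p hp
  by_cases h : ∃ j, p ∈ Ps j
  · obtain ⟨j, hj⟩ := h
    rw [hPre t ht j p hj, if_neg (ne_of_mem_of_not_mem (hin t ht) hp).symm]
  · exact he t ht hte p (not_exists.1 h)

end StateMachineFamily

section Dynamics

variable {P T E : Type} [Fintype T] {N : SyncPN P T E}

/-- The transitions that fire simultaneously when the event `e` occurs at the marking `M`. -/
noncomputable def fired (N : SyncPN P T E) (M : P → ℕ) (e : E) : Finset T :=
  {t | N.f t = e ∧ enabled N M t}

theorem mem_fired {M : P → ℕ} {e : E} {t : T} :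
    t ∈ fired N M e ↔ N.f t = e ∧ enabled N M t := by
  simp [fired]

theorem step_apply (N : SyncPN P T E) (M : P → ℕ) (e : E) (p : P) :
    step N M e p =
      M p + ∑ t ∈ fired N M e, N.Post p t - ∑ t ∈ fired N M e, N.Pre p t := by
  simp only [step, fired, Finset.sum_filter]

theorem stepWord_append (N : SyncPN P T E) (M : P → ℕ) (u v : List E) :
    stepWord N M (u ++ v) = stepWord N (stepWord N M u) v :=
  List.foldl_append

theorem deterministic.sum_pre_fired_le (hdet : deterministic N) (M : P → ℕ) (e : E) (p : P) :
    ∑ t ∈ fired N M e, N.Pre p t ≤ M p := by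
  by_cases h : ∃ t ∈ fired N M e, N.Pre p t ≠ 0
  · obtain ⟨t, ht, htp⟩ := h
    have hunique : ∀ t' ∈ fired N M e, t' ≠ t → N.Pre p t' = 0 := by
      intro t' ht' hne
      by_contra ht'p
      exact hdet p t' t hne (Nat.one_le_iff_ne_zero.2 ht'p) (Nat.one_le_iff_ne_zero.2 htp)
        ((mem_fired.1 ht').1.trans (mem_fired.1 ht).1.symm)
    rw [Finset.sum_eq_single_of_mem t ht hunique]
    exact (mem_fired.1 ht).2 p
  · push Not at h
    simp [Finset.sum_eq_zero h]

/-- The state equation with the consumed tokens moved to the left, where no subtraction is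
truncated. -/
theorem deterministic.step_add_sum_pre (hdet : deterministic N) (M : P → ℕ) (e : E) (p : P) :
    step N M e p + ∑ t ∈ fired N M e, N.Pre p t = M p + ∑ t ∈ fired N M e, N.Post p t := by
  rw [step_apply, Nat.sub_add_cancel (le_add_right (hdet.sum_pre_fired_le M e p))]

theorem ConservativeOn.sum_step {S : Finset P} (hcons : ConservativeOn N S)
    (hdet : deterministic N) (M : P → ℕ) (e : E) :
    ∑ p ∈ S, step N M e p = ∑ p ∈ S, M p := by
  have hflow : ∑ p ∈ S, ∑ t ∈ fired N M e, N.Pre p t =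
      ∑ p ∈ S, ∑ t ∈ fired N M e, N.Post p t := by
    rw [Finset.sum_comm, Finset.sum_comm (s := S)]
    exact Finset.sum_congr rfl fun t _ => hcons t
  refine Nat.add_right_cancel (m := ∑ p ∈ S, ∑ t ∈ fired N M e, N.Pre p t) ?_
  calc ∑ p ∈ S, step N M e p + ∑ p ∈ S, ∑ t ∈ fired N M e, N.Pre p t
      = ∑ p ∈ S, (M p + ∑ t ∈ fired N M e, N.Post p t) := by
        simp only [← Finset.sum_add_distrib, hdet.step_add_sum_pre]
    _ = ∑ p ∈ S, M p + ∑ p ∈ S, ∑ t ∈ fired N M e, N.Pre p t := by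
        rw [Finset.sum_add_distrib, hflow]

theorem ConservativeOn.sum_stepWord {S : Finset P} (hcons : ConservativeOn N S)
    (hdet : deterministic N) (M : P → ℕ) (w : List E) :
    ∑ p ∈ S, stepWord N M w p = ∑ p ∈ S, M p := by
  induction w generalizing M with
  | nil => rfl
  | cons e w ih => exact (ih (step N M e)).trans (hcons.sum_step hdet M e)

/-- `w` is a synchronizing sequence of `N` for `κ` tokens, with target marking `Mbar`. -/
def IsSynchronizing [Fintype P] (N : SyncPN P T E) (κ : ℕ) (w : List E) (Mbar : P → ℕ) : Prop :=
  ∀ M : P → ℕ, ∑ p, M p = κ → stepWord N M w = Mbar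

namespace IsSubnet

variable {Ps : Finset P} {Ts : Finset T} {N' : SyncPN {p // p ∈ Ps} {t // t ∈ Ts} E}

theorem mem_fired_restrict_iff (h : IsSubnet N N') {e : E} (he : InputsWithin N Ps Ts e)
    (M : P → ℕ) (t : {t // t ∈ Ts}) :
    t ∈ fired N' (Ps.restrict M) e ↔ (t : T) ∈ fired N M e := by
  rw [mem_fired, mem_fired, h.label_eq]
  refine and_congr_right fun hte => ⟨fun hen p => ?_, fun hen p => ?_⟩
  · by_cases hp : p ∈ Ps
    · exact (h.pre_eq ⟨p, hp⟩ t).symm.trans_le (hen ⟨p, hp⟩)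
    · exact (he t t.2 hte p hp).trans_le (Nat.zero_le _)
  · exact (h.pre_eq p t).trans_le (hen p)

theorem sum_fired_restrict (h : IsSubnet N N') {e : E} (he : InputsWithin N Ps Ts e)
    (M : P → ℕ) {g : T → ℕ} (hg : ∀ t ∉ Ts, g t = 0) :
    ∑ t ∈ fired N' (Ps.restrict M) e, g t = ∑ t ∈ fired N M e, g t := by
  refine Finset.sum_of_injOn Subtype.val Subtype.val_injective.injOn
    (fun t ht => (h.mem_fired_restrict_iff he M t).1 ht) (fun t ht hnot => hg t fun htTs => ?_)
    (fun _ _ => rfl)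
  exact hnot ⟨⟨t, htTs⟩, (h.mem_fired_restrict_iff he M ⟨t, htTs⟩).2 ht, rfl⟩

theorem restrict_step (h : IsSubnet N N') {e : E} (he : InputsWithin N Ps Ts e) (M : P → ℕ) :
    Ps.restrict (step N M e) = step N' (Ps.restrict M) e := by
  funext p
  simp only [Finset.restrict, step_apply, h.pre_eq, h.post_eq]
  rw [← h.sum_fired_restrict he M fun t ht => h.pre_eq_zero t ht p p.2,
    ← h.sum_fired_restrict he M fun t ht => h.post_eq_zero t ht p p.2]

theorem restrict_stepWord (h : IsSubnet N N') {w : List E}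
    (hw : ∀ e ∈ w, InputsWithin N Ps Ts e) (M : P → ℕ) :
    Ps.restrict (stepWord N M w) = stepWord N' (Ps.restrict M) w := by
  induction w generalizing M with
  | nil => rfl
  | cons e w ih =>
    obtain ⟨he, hw⟩ := List.forall_mem_cons.1 hw
    calc Ps.restrict (stepWord N (step N M e) w)
        = stepWord N' (Ps.restrict (step N M e)) w := ih hw _
      _ = stepWord N' (step N' (Ps.restrict M) e) w := by rw [h.restrict_step he]

theorem restrict_stepWord_synchronizing (h : IsSubnet N N') (hdet : deterministic N)
    (hcons : ConservativeOn N' Finset.univ) {κ : ℕ} {u w v : List E}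
    {Mbar : {p // p ∈ Ps} → ℕ} (hsync : IsSynchronizing N' κ w Mbar)
    (hw : ∀ e ∈ w, InputsWithin N Ps Ts e) (hv : ∀ e ∈ v, InputsWithin N Ps Ts e)
    {M : P → ℕ} (hM : ∑ p ∈ Ps, M p = κ) :
    Ps.restrict (stepWord N M (u ++ (w ++ v))) = stepWord N' Mbar v := by
  have hcount : ∑ p, Ps.restrict (stepWord N M u) p = κ := by
    rw [← hM, ← (h.conservativeOn hcons).sum_stepWord hdet M u]
    exact Finset.sum_coe_sort Ps (stepWord N M u)
  rw [stepWord_append, stepWord_append, h.restrict_stepWord hv, h.restrict_stepWord hw,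
    hsync _ hcount]

end IsSubnet

end Dynamics

theorem exists_eq_append_cons_filter_lt {α : Type*} [Preorder α] [DecidableLT α] {l : List α}
    (hl : l.Pairwise (· < ·)) {i : α} (hi : i ∈ l) :
    ∃ s, l = s ++ i :: l.filter (fun j => i < j) := by
  obtain ⟨s, t, rfl⟩ := List.append_of_mem hi
  rw [List.pairwise_append, List.pairwise_cons] at hl
  obtain ⟨-, ⟨hit, -⟩, hst⟩ := hl
  have hs : s.filter (fun j => i < j) = [] :=
    List.filter_eq_nil_iff.2 fun a ha => by simpa using (hst a ha i List.mem_cons_self).not_gt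
  have ht : t.filter (fun j => i < j) = t :=
    List.filter_eq_self.2 fun a ha => by simpa using hit a ha
  exact ⟨s, by rw [List.filter_append, hs, List.filter_cons_of_neg (by simp), ht, List.nil_append]⟩

theorem multi_subnet_SS_synchronizes_general {ι : Type*} [Preorder ι] [DecidableLT ι]
    {P T E : Type} [Fintype T] {N : SyncPN P T E} (hdet : deterministic N)
    {Ps : ι → Finset P} {Ts : ι → Finset T}
    {Ns : (i : ι) → SyncPN {p // p ∈ Ps i} {t // t ∈ Ts i} E}
    (hsub : ∀ i, IsSubnet N (Ns i)) (hcons : ∀ i, ConservativeOn (Ns i) Finset.univ)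
    {κ : ι → ℕ} {wbar : ι → List E} {Mbars : (i : ι) → {p // p ∈ Ps i} → ℕ}
    (hSS : ∀ i, IsSynchronizing (Ns i) (κ i) (wbar i) (Mbars i))
    (hii : ∀ i, ∀ e ∈ wbar i, ∀ j, j ≤ i → InputsWithin N (Ps j) (Ts j) e)
    {l : List ι} (hl : l.Pairwise (· < ·)) {M : P → ℕ} (hM : ∀ i, ∑ p ∈ Ps i, M p = κ i) :
    ∀ i ∈ l, (Ps i).restrict (stepWord N M (l.map wbar).flatten) =
      stepWord (Ns i) (Mbars i) ((l.filter (fun j => i < j)).map wbar).flatten := by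
  intro i hi
  have hlater : ∀ e ∈ ((l.filter (fun j => i < j)).map wbar).flatten,
      InputsWithin N (Ps i) (Ts i) e := by
    simp only [List.mem_flatten, List.mem_map, List.mem_filter, decide_eq_true_eq]
    rintro e ⟨_, ⟨k, ⟨-, hik⟩, rfl⟩, he⟩
    exact hii k e he i hik.le
  obtain ⟨s, hs⟩ := exists_eq_append_cons_filter_lt hl hi
  have hsplit : (l.map wbar).flatten =
      (s.map wbar).flatten ++ (wbar i ++ ((l.filter (fun j => i < j)).map wbar).flatten) := by
    conv_lhs => rw [hs]
    rw [List.map_append, List.map_cons, List.flatten_append, List.flatten_cons]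
  rw [hsplit]
  exact (hsub i).restrict_stepWord_synchronizing hdet (hcons i) (hSS i)
    (fun e he => hii i e he i le_rfl) hlater (hM i)

/-- Proposition 8: concatenating synchronizing sequences `w̄₁ … w̄ₙ` of `n` disjoint
state machine subnets drives the full net to a marking that, on the places of the
`i`-th subnet, equals the marking `M̄'_{s,i}` reached in the isolated subnet from
`M̄_{s,i}` under the later sequences `w̄_{i+1} … w̄ₙ`. -/
theorem multi_subnet_SS_synchronizes {P T E : Type} [Fintype P] [Fintype T]
    (n : ℕ) (N : SyncPN P T E) (hdet : deterministic N)
    (Ps : Fin n → Finset P) (Ts : Fin n → Finset T) (ins outs : T → P)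
    (hPdisj : ∀ i j, i ≠ j → Disjoint (Ps i) (Ps j))
    (hTdisj : ∀ i j, i ≠ j → Disjoint (Ts i) (Ts j))
    (hin : ∀ i, ∀ t ∈ Ts i, ins t ∈ Ps i)
    (hout : ∀ i, ∀ t ∈ Ts i, outs t ∈ Ps i)
    (hPre : ∀ i, ∀ t ∈ Ts i, ∀ j, ∀ p ∈ Ps j,
      N.Pre p t = if p = ins t then 1 else 0)
    (hPost : ∀ i, ∀ t ∈ Ts i, ∀ j, ∀ p ∈ Ps j,
      N.Post p t = if p = outs t then 1 else 0)
    (hTz : ∀ t : T, (∀ i, t ∉ Ts i) → ∀ j, ∀ p ∈ Ps j,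
      N.Pre p t = 0 ∧ N.Post p t = 0)
    (κ : Fin n → ℕ) (wbar : Fin n → List E)
    (Mbars : (i : Fin n) → {p // p ∈ Ps i} → ℕ)
    (hSS : ∀ i, ∀ Ms : {p // p ∈ Ps i} → ℕ, (∑ q, Ms q = κ i) →
      stepWord (subSM (Ps i) (Ts i) ins outs N.f) Ms (wbar i) = Mbars i)
    (hii : ∀ i, ∀ e ∈ wbar i, ∀ j, j ≤ i → ∀ t ∈ Ts j, N.f t = e →
      ∀ p : P, (∀ j', p ∉ Ps j') → N.Pre p t = 0) :
    ∀ M : P → ℕ, (∀ i, ∑ p ∈ Ps i, M p = κ i) →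
      ∀ M' : P → ℕ, stepWord N M (((List.finRange n).map wbar).flatten) = M' →
        ∀ (i : Fin n) (p : P) (hp : p ∈ Ps i),
          M' p =
            stepWord (subSM (Ps i) (Ts i) ins outs N.f) (Mbars i)
              ((((List.finRange n).filter (fun j => i < j)).map wbar).flatten)
              ⟨p, hp⟩ := by
  rintro M hM _ rfl i p hp
  exact congrFun (multi_subnet_SS_synchronizes_general hdet
    (isSubnet_subSM hPdisj hin hout hPre hPost hTz)
    (fun i => (isSM_subSM (hin i) (hout i) N.f).conservativeOn_univ) hSS
    (fun i e he j hji => inputsWithin_of_forall_notMem (hin j) (hPre j) (hii i e he j hji))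
    (List.pairwise_lt_finRange n) hM i (List.mem_finRange i)) ⟨p, hp⟩
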